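/- arXiv:1401.1896 — 4 statements merged into one kernel-verified Lean document; each statement's English description precedes it below -/
import Mathlib

section
/- Let X be a compact metric space, T : X → X continuous, and Φ = (φ_n)_{n≥1} almost additive on (X,T) with values in ℝ^d (each coordinate sequence almost additive). If (μ_k)_{k≥1} is a sequence in M(X,T) converging in the weak-* topology to a measure μ ∈ M(X,T), then lim_{k→∞} Φ_*(μ_k) = Φ_*(μ); that is, lim_{k→∞} lim_{m→∞} (1/m) ∫ φ_m dμ_k = lim_{m→∞} (1/m) ∫ φ_m dμ. -/
/-!
Integrating an almost additive sequence against an invariant probability measure `ν` gives a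
sequence `a n = ∫ φ n ∂ν` with `‖a (n + p) - a n - a p‖ ≤ C`. Telescoping along the multiples of
`n` yields `‖a n / n - lim a m / m‖ ≤ C / n`. As `C` does not depend on `ν`, the weakly continuous
maps `ν ↦ (1 / n) ∫ φ n ∂ν` converge uniformly on invariant measures, and limits may be exchanged.
-/

open MeasureTheory Filter Topology

section AlmostAdditiveNumbers

variable {E : Type*} [SeminormedAddCommGroup E] {a : ℕ → E} {C : ℝ}

lemma norm_succ_mul_sub_nsmul_le
    (ha : ∀ n p, 1 ≤ n → 1 ≤ p → ‖a (n + p) - a n - a p‖ ≤ C) {n : ℕ} (hn : 1 ≤ n) (k : ℕ) :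
    ‖a ((k + 1) * n) - (k + 1) • a n‖ ≤ k * C := by
  induction k with
  | zero => simp
  | succ k ih =>
    have htelescope : a ((k + 1 + 1) * n) - (k + 1 + 1) • a n =
        (a ((k + 1) * n + n) - a ((k + 1) * n) - a n) + (a ((k + 1) * n) - (k + 1) • a n) := by
      rw [add_one_mul (k + 1) n, succ_nsmul (a n) (k + 1)]
      abel
    calc ‖a ((k + 1 + 1) * n) - (k + 1 + 1) • a n‖
        ≤ C + k * C := by
          rw [htelescope]
          exact norm_add_le_of_le (ha _ n (Nat.mul_pos k.succ_pos hn) hn) ih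
      _ = (k + 1 : ℕ) * C := by
          push_cast
          ring

lemma norm_average_sub_average_succ_mul_le [NormedSpace ℝ E]
    (ha : ∀ n p, 1 ≤ n → 1 ≤ p → ‖a (n + p) - a n - a p‖ ≤ C) {n : ℕ} (hn : 1 ≤ n) (k : ℕ) :
    ‖(1 / (n : ℝ)) • a n - (1 / (((k + 1) * n : ℕ) : ℝ)) • a ((k + 1) * n)‖ ≤ C / n := by
  have hC : 0 ≤ C := (norm_nonneg _).trans (ha 1 1 le_rfl le_rfl)
  have hfactor : (1 / (n : ℝ)) • a n - (1 / (((k + 1) * n : ℕ) : ℝ)) • a ((k + 1) * n) =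
      -((1 / (((k + 1) * n : ℕ) : ℝ)) • (a ((k + 1) * n) - (k + 1) • a n)) := by
    rw [← Nat.cast_smul_eq_nsmul ℝ, smul_sub, smul_smul, neg_sub]
    congr 2
    push_cast
    field_simp
  calc ‖(1 / (n : ℝ)) • a n - (1 / (((k + 1) * n : ℕ) : ℝ)) • a ((k + 1) * n)‖
      = 1 / (((k + 1) * n : ℕ) : ℝ) * ‖a ((k + 1) * n) - (k + 1) • a n‖ := by
        rw [hfactor, norm_neg, norm_smul, Real.norm_of_nonneg (by positivity)]
    _ ≤ 1 / (((k + 1) * n : ℕ) : ℝ) * ((k + 1) * C) := by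
        gcongr
        exact (norm_succ_mul_sub_nsmul_le ha hn k).trans (by gcongr; linarith)
    _ = C / n := by
        push_cast
        field_simp

lemma norm_average_sub_le_of_tendsto [NormedSpace ℝ E]
    (ha : ∀ n p, 1 ≤ n → 1 ≤ p → ‖a (n + p) - a n - a p‖ ≤ C) {l : E}
    (hl : Tendsto (fun m : ℕ ↦ (1 / (m : ℝ)) • a m) atTop (𝓝 l)) {n : ℕ} (hn : 1 ≤ n) :
    ‖(1 / (n : ℝ)) • a n - l‖ ≤ C / n := by
  have hmultiples : Tendsto (fun k : ℕ ↦ (k + 1) * n) atTop atTop :=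
    (tendsto_add_atTop_nat 1).atTop_mul_const' hn
  exact le_of_tendsto' (tendsto_const_nhds.sub (hl.comp hmultiples)).norm
    (norm_average_sub_average_succ_mul_le ha hn)

end AlmostAdditiveNumbers

/-- `φ` is an almost additive sequence over the dynamics `T`, with constant `C`. Indices start at
`1`, so `φ 0` is unconstrained; vector-valued sequences are measured in norm, which for `ℝ^d`
amounts to almost additivity of each coordinate (`exists_almostAdditiveWith_pi_iff`). -/
def AlmostAdditiveWith {X E : Type*} [SeminormedAddCommGroup E] (C : ℝ) (T : X → X)
    (φ : ℕ → X → E) : Prop :=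
  ∀ n p, 1 ≤ n → 1 ≤ p → ∀ x, ‖φ (n + p) x - φ n x - φ p (T^[n] x)‖ ≤ C

lemma almostAdditiveWith_real_iff {X : Type*} {C : ℝ} {T : X → X} {f : ℕ → X → ℝ} :
    AlmostAdditiveWith C T f ↔ ∀ n p, 1 ≤ n → 1 ≤ p → ∀ x,
      -C + f n x + f p (T^[n] x) ≤ f (n + p) x ∧ f (n + p) x ≤ f n x + f p (T^[n] x) + C := by
  refine forall₂_congr fun n p ↦ forall₃_congr fun _ _ x ↦ ?_
  rw [Real.norm_eq_abs, abs_le]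
  constructor <;> rintro ⟨hlower, hupper⟩ <;> constructor <;> linarith

lemma exists_almostAdditiveWith_pi_iff {X ι : Type*} [Fintype ι] {E : ι → Type*}
    [∀ j, SeminormedAddCommGroup (E j)] {T : X → X} {φ : ℕ → X → ∀ j, E j} :
    (∃ C, AlmostAdditiveWith C T φ) ↔ ∀ j, ∃ C, AlmostAdditiveWith C T (fun n x ↦ φ n x j) := by
  constructor
  · rintro ⟨C, hC⟩ j
    exact ⟨C, fun n p hn hp x ↦ (norm_le_pi_norm _ j).trans (hC n p hn hp x)⟩
  · intro h
    choose C hC using h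
    obtain ⟨M, hM⟩ := Finite.exists_le C
    refine ⟨max M 0, fun n p hn hp x ↦ (pi_norm_le_iff_of_nonneg (le_max_right M 0)).2 fun j ↦ ?_⟩
    exact (hC j n p hn hp x).trans ((hM j).trans (le_max_left M 0))

namespace AlmostAdditiveWith

variable {X E : Type*} [MeasurableSpace X] [NormedAddCommGroup E] [NormedSpace ℝ E]
  {C : ℝ} {T : X → X} {φ : ℕ → X → E}

lemma norm_integral_add_sub_le (hφ : AlmostAdditiveWith C T φ) {ν : Measure X}
    [IsProbabilityMeasure ν] (hT : MeasurePreserving T ν ν)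
    (hint : ∀ n, 1 ≤ n → Integrable (φ n) ν) {n p : ℕ} (hn : 1 ≤ n) (hp : 1 ≤ p) :
    ‖∫ x, φ (n + p) x ∂ν - ∫ x, φ n x ∂ν - ∫ x, φ p x ∂ν‖ ≤ C := by
  have hTn : MeasurePreserving T^[n] ν ν := hT.iterate n
  have hcomp : Integrable (fun x ↦ φ p (T^[n] x)) ν := hTn.integrable_comp_of_integrable (hint p hp)
  have hinvariant : ∫ x, φ p x ∂ν = ∫ x, φ p (T^[n] x) ∂ν := by
    conv_lhs => rw [← hTn.map_eq]
    refine integral_map hTn.aemeasurable ?_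
    rw [hTn.map_eq]
    exact (hint p hp).aestronglyMeasurable
  have hsum := hint (n + p) (hn.trans (n.le_add_right p))
  have hdiff : Integrable (fun x ↦ φ (n + p) x - φ n x) ν := hsum.sub (hint n hn)
  calc ‖∫ x, φ (n + p) x ∂ν - ∫ x, φ n x ∂ν - ∫ x, φ p x ∂ν‖
      = ‖∫ x, (φ (n + p) x - φ n x - φ p (T^[n] x)) ∂ν‖ := by
        rw [hinvariant, integral_sub hdiff hcomp, integral_sub hsum (hint n hn)]
    _ ≤ C * ν.real Set.univ := norm_integral_le_of_norm_le_const (ae_of_all ν (hφ n p hn hp))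
    _ = C := by rw [probReal_univ, mul_one]

lemma tendstoUniformly_average_integral (hφ : AlmostAdditiveWith C T φ) {α : Type*}
    {ν : α → Measure X} [∀ i, IsProbabilityMeasure (ν i)]
    (hT : ∀ i, MeasurePreserving T (ν i) (ν i))
    (hint : ∀ i n, 1 ≤ n → Integrable (φ n) (ν i)) {L : α → E}
    (hL : ∀ i, Tendsto (fun m : ℕ ↦ (1 / (m : ℝ)) • ∫ x, φ m x ∂ν i) atTop (𝓝 (L i))) :
    TendstoUniformly (fun (m : ℕ) i ↦ (1 / (m : ℝ)) • ∫ x, φ m x ∂ν i) L atTop := by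
  rw [Metric.tendstoUniformly_iff]
  intro ε hε
  filter_upwards [eventually_ge_atTop 1,
    (tendsto_const_div_atTop_nhds_zero_nat C).eventually_lt_const hε] with n hn hnε i
  rw [dist_comm, dist_eq_norm]
  exact (norm_average_sub_le_of_tendsto
    (fun _ _ ↦ hφ.norm_integral_add_sub_le (hT i) (hint i)) (hL i) hn).trans_lt hnε

end AlmostAdditiveWith

section WeakConvergence

open BoundedContinuousFunction

variable {X E : Type*} [TopologicalSpace X] [MeasurableSpace X] [OpensMeasurableSpace X]
  [NormedAddCommGroup E]

lemma integrable_of_continuous_of_isBounded_range [SecondCountableTopologyEither X E] {f : X → E}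
    (hf : Continuous f) (hbdd : Bornology.IsBounded (Set.range f)) (ν : Measure X)
    [IsFiniteMeasure ν] : Integrable f ν := by
  obtain ⟨K, hK⟩ := hbdd.exists_norm_le
  exact .of_bound hf.aestronglyMeasurable K (ae_of_all ν fun x ↦ hK _ (Set.mem_range_self x))

variable [NormedSpace ℝ E] [FiniteDimensional ℝ E]

lemma tendsto_integral_of_tendsto_probabilityMeasure {α : Type*} {F : Filter α}
    {ν : α → ProbabilityMeasure X} {μ : ProbabilityMeasure X} (hν : Tendsto ν F (𝓝 μ))
    {f : X → E} (hf : Continuous f) (hbdd : Bornology.IsBounded (Set.range f)) :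
    Tendsto (fun i ↦ ∫ x, f x ∂(ν i : Measure X)) F (𝓝 (∫ x, f x ∂(μ : Measure X))) := by
  obtain ⟨K, hK⟩ := hbdd.exists_norm_le
  let e : E ≃L[ℝ] (Fin (Module.finrank ℝ E) → ℝ) := (Module.finBasis ℝ E).equivFunL
  rw [e.toHomeomorph.isInducing.tendsto_nhds_iff, tendsto_pi_nhds]
  intro j
  let c : StrongDual ℝ E := (ContinuousLinearMap.proj j).comp e.toContinuousLinearMap
  let g : X →ᵇ ℝ := .ofNormedAddCommGroup (c ∘ f) (c.continuous.comp hf) (‖c‖ * K)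
    fun x ↦ c.le_opNorm_of_le (hK _ (Set.mem_range_self x))
  have hcoord (ρ : ProbabilityMeasure X) :
      ∫ x, g x ∂(ρ : Measure X) = e (∫ x, f x ∂(ρ : Measure X)) j :=
    c.integral_comp_comm (integrable_of_continuous_of_isBounded_range hf hbdd ρ)
  have hg := ProbabilityMeasure.tendsto_iff_forall_integral_tendsto.1 hν g
  simp only [hcoord] at hg
  exact hg

theorem almost_additive_weak_star_continuous_general {C : ℝ} {T : X → X} {φ : ℕ → X → E}
    (hφ : AlmostAdditiveWith C T φ) (hcont : ∀ n, 1 ≤ n → Continuous (φ n))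
    (hbdd : ∀ n, 1 ≤ n → Bornology.IsBounded (Set.range (φ n)))
    {α : Type*} {F : Filter α} {ν : α → ProbabilityMeasure X} {μ : ProbabilityMeasure X}
    (hinv : ∀ i, MeasurePreserving T (ν i : Measure X) (ν i)) (hν : Tendsto ν F (𝓝 μ))
    {Lν : α → E} {L : E}
    (hLν : ∀ i, Tendsto (fun m : ℕ ↦ (1 / (m : ℝ)) • ∫ x, φ m x ∂(ν i : Measure X)) atTop
      (𝓝 (Lν i)))
    (hL : Tendsto (fun m : ℕ ↦ (1 / (m : ℝ)) • ∫ x, φ m x ∂(μ : Measure X)) atTop (𝓝 L)) :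
    Tendsto Lν F (𝓝 L) := by
  have hunif := hφ.tendstoUniformly_average_integral hinv
    (fun i n hn ↦ integrable_of_continuous_of_isBounded_range (hcont n hn) (hbdd n hn) (ν i)) hLν
  refine hunif.tendsto_of_eventually_tendsto ?_ hL
  filter_upwards [eventually_ge_atTop 1] with n hn
  exact (tendsto_integral_of_tendsto_probabilityMeasure hν (hcont n hn) (hbdd n hn)).const_smul _

end WeakConvergence

/-- For an `ℝ^d`-valued almost additive sequence `Φ` on a compact metric
space `(X,T)`, the map `μ ↦ Φ_*(μ)` is continuous on `M(X,T)` in the weak-* topology: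
if invariant probability measures `μ_k → μ` weakly, then `Φ_*(μ_k) → Φ_*(μ)`. -/
theorem almost_additive_weak_star_continuous
    {X : Type*} [MetricSpace X] [CompactSpace X] [MeasurableSpace X] [BorelSpace X]
    (T : X → X) (hT : Continuous T)
    (d : ℕ) (φ : ℕ → X → Fin d → ℝ) (hφcont : ∀ n, 1 ≤ n → Continuous (φ n))
    (haa : ∀ j : Fin d, ∃ C : ℝ, 0 < C ∧ ∀ n p : ℕ, 1 ≤ n → 1 ≤ p → ∀ x : X,
      -C + φ n x j + φ p (T^[n] x) j ≤ φ (n + p) x j ∧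
        φ (n + p) x j ≤ φ n x j + φ p (T^[n] x) j + C)
    (μk : ℕ → ProbabilityMeasure X) (μ : ProbabilityMeasure X)
    (hinvk : ∀ k, Measure.map T (μk k : Measure X) = (μk k : Measure X))
    (hinv : Measure.map T (μ : Measure X) = (μ : Measure X))
    (hweak : Tendsto μk atTop (𝓝 μ))
    (Lk : ℕ → Fin d → ℝ) (L : Fin d → ℝ)
    (hLk : ∀ k, Tendsto
      (fun m : ℕ => (1 / (m : ℝ)) • ∫ x, φ m x ∂(μk k : Measure X)) atTop (𝓝 (Lk k)))
    (hL : Tendsto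
      (fun m : ℕ => (1 / (m : ℝ)) • ∫ x, φ m x ∂(μ : Measure X)) atTop (𝓝 L)) :
    Tendsto Lk atTop (𝓝 L) := by
  obtain ⟨C, hC⟩ := exists_almostAdditiveWith_pi_iff.2 fun j ↦
    (haa j).imp fun _ h ↦ almostAdditiveWith_real_iff.2 h.2
  exact almost_additive_weak_star_continuous_general hC hφcont
    (fun n hn ↦ (isCompact_range (hφcont n hn)).isBounded)
    (fun k ↦ ⟨hT.measurable, hinvk k⟩) hweak hLk hL
end

section
/- Let Σ = {1,…,m}^ℕ be the full shift on m symbols with the shift map σ, and let Φ = (φ_n)_{n≥1} be an almost additive sequence on (Σ,σ) with values in ℝ^d. Then lim_{n→∞} (1/n) ‖Φ‖_n = 0, where ‖Φ‖_n := sup{ |φ_n(ω) − φ_n(τ)| : ω, τ ∈ Σ with ω_i = τ_i for 1 ≤ i ≤ n } and |·| is the Euclidean norm on ℝ^d. -/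
open Filter Topology

/-!
Write `v_n(f)` for the variation of `f` over pairs of points agreeing on their first `n`
coordinates. Splitting off the first block of length `p` and applying almost additivity at both
points gives `v_{p+q}(φ_{p+q}) ≤ v_{p+q}(φ_p) + v_q(φ_q) + 2C`. For fixed `p`, uniform continuity
makes the first term at most `1` once `q` is large, so `a_n = v_n(φ_n)` eventually grows by at most
`2C + 1` along steps of length `p`, whence `limsup a_n / n ≤ (2C + 1) / p`. The numerator does not
depend on `p`, so letting `p → ∞` gives the claim.
-/

lemma bddAbove_range_of_eventually_add_le {β : Type*} [Preorder β] [IsDirectedOrder β]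
    {b : ℕ → β} {p : ℕ} (hp : 0 < p) (hb : ∀ᶠ q in atTop, b (p + q) ≤ b q) :
    BddAbove (Set.range b) := by
  obtain ⟨N, hN⟩ := eventually_atTop.1 hb
  have : Nonempty β := ⟨b 0⟩
  obtain ⟨K, hK⟩ := ((Set.finite_lt_nat (N + p)).image b).bddAbove
  refine ⟨K, Set.forall_mem_range.2 fun n => ?_⟩
  induction n using Nat.strong_induction_on with
  | h n ih =>
    obtain hn | hn := lt_or_ge n (N + p)
    · exact hK (Set.mem_image_of_mem b hn)
    · calc b n = b (p + (n - p)) := by congr; omega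
        _ ≤ b (n - p) := hN _ (by omega)
        _ ≤ K := ih _ (by omega)

lemma exists_le_div_mul_add_of_eventually_add_le {a : ℕ → ℝ} {D : ℝ} {p : ℕ} (hp : 0 < p)
    (ha : ∀ᶠ q in atTop, a (p + q) ≤ a q + D) :
    ∃ K, ∀ n : ℕ, a n ≤ D / p * n + K := by
  have hb : ∀ᶠ q : ℕ in atTop, a (p + q) - D / p * (p + q : ℕ) ≤ a q - D / p * q := by
    filter_upwards [ha] with q hq
    have : D / p * (p + q : ℕ) = D + D / p * q := by
      push_cast
      field_simp
    linarith
  obtain ⟨K, hK⟩ := bddAbove_range_of_eventually_add_le (b := fun n => a n - D / p * n) hp hb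
  exact ⟨K, fun n => sub_le_iff_le_add'.1 (hK (Set.mem_range_self n))⟩

lemma tendsto_div_atTop_zero_of_eventually_add_le {a : ℕ → ℝ} (ha₀ : ∀ n, 0 ≤ a n) {D : ℝ}
    (ha : ∀ p, 0 < p → ∀ᶠ q in atTop, a (p + q) ≤ a q + D) :
    Tendsto (fun n : ℕ => a n / n) atTop (𝓝 0) := by
  refine tendsto_order.2 ⟨fun l hl => .of_forall fun n => ?_, fun ε hε => ?_⟩
  · exact hl.trans_le (div_nonneg (ha₀ n) n.cast_nonneg)
  obtain ⟨p, hDp, hp⟩ : ∃ p : ℕ, D / p < ε ∧ 0 < p :=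
    (((tendsto_const_div_atTop_nhds_zero_nat D).eventually_lt_const hε).and
      (eventually_gt_atTop 0)).exists
  obtain ⟨K, hK⟩ := exists_le_div_mul_add_of_eventually_add_le hp (ha p hp)
  have hlim : Tendsto (fun n : ℕ => D / p + K / n) atTop (𝓝 (D / p)) := by
    simpa only [add_zero] using (tendsto_const_div_atTop_nhds_zero_nat K).const_add (D / p)
  filter_upwards [hlim.eventually_lt_const hDp, eventually_gt_atTop 0] with n hn hn₀
  calc a n / n ≤ (D / p * n + K) / n := by gcongr; exact hK n
    _ = D / p + K / n := by field_simp
    _ < ε := hn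

section CylinderVariation

variable {α E : Type*} [SeminormedAddCommGroup E]

/-- The `n`-th variation of `f`: the supremum of `‖f ω - f τ‖` over all sequences `ω`, `τ` with the
same first `n` terms. As a real supremum it is `0`, not `∞`, when these norms are unbounded. -/
noncomputable def cylinderVariation (f : (ℕ → α) → E) (n : ℕ) : ℝ :=
  sSup {r : ℝ | ∃ ω τ : ℕ → α, (∀ i < n, ω i = τ i) ∧ r = ‖f ω - f τ‖}

lemma cylinderVariation_nonneg (f : (ℕ → α) → E) (n : ℕ) : 0 ≤ cylinderVariation f n :=
  Real.sSup_nonneg <| by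
    rintro _ ⟨ω, τ, -, rfl⟩
    exact norm_nonneg _

variable {f : (ℕ → α) → E}

lemma cylinderVariation_le {n : ℕ} {M : ℝ} (hM : 0 ≤ M)
    (hf : ∀ ω τ : ℕ → α, (∀ i < n, ω i = τ i) → ‖f ω - f τ‖ ≤ M) :
    cylinderVariation f n ≤ M :=
  Real.sSup_le (by rintro _ ⟨ω, τ, h, rfl⟩; exact hf ω τ h) hM

lemma norm_sub_le_cylinderVariation (hf : Bornology.IsBounded (Set.range f)) {n : ℕ}
    {ω τ : ℕ → α} (h : ∀ i < n, ω i = τ i) : ‖f ω - f τ‖ ≤ cylinderVariation f n := by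
  obtain ⟨M, hM⟩ := Metric.isBounded_range_iff.1 hf
  refine le_csSup ⟨M, ?_⟩ ⟨ω, τ, h, rfl⟩
  rintro _ ⟨ω', τ', -, rfl⟩
  exact dist_eq_norm (f ω') (f τ') ▸ hM ω' τ'

end CylinderVariation

section UniformContinuity

open scoped Uniformity

variable {α : Type*} [UniformSpace α]

lemma eventually_forall_eq_imp_mem_of_mem_uniformity {V : Set ((ℕ → α) × (ℕ → α))}
    (hV : V ∈ 𝓤 (ℕ → α)) :
    ∀ᶠ n in atTop, ∀ ω τ : ℕ → α, (∀ i < n, ω i = τ i) → (ω, τ) ∈ V := by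
  let agree (n : ℕ) : Set ((ℕ → α) × (ℕ → α)) := {x | ∀ i < n, x.1 i = x.2 i}
  have agree_anti : Antitone agree := fun _ _ hmn _ hx i hi => hx i (hi.trans_le hmn)
  have iInf_le_uniformity : ⨅ n, 𝓟 (agree n) ≤ 𝓤 (ℕ → α) := by
    rw [Pi.uniformity]
    refine le_iInf fun i => iInf_le_of_le (i + 1) ?_
    rw [← map_le_iff_le_comap, map_principal]
    refine le_trans (principal_mono.2 ?_) refl_le_uniformity
    rintro _ ⟨x, hx, rfl⟩
    exact hx i i.lt_succ_self
  obtain ⟨N, -, hN⟩ :=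
    (hasBasis_iInf_principal agree_anti.directed_ge).mem_iff.1 (iInf_le_uniformity hV)
  filter_upwards [eventually_ge_atTop N] with n hn ω τ h
  exact hN (agree_anti hn h)

lemma tendsto_cylinderVariation_of_uniformContinuous {E : Type*} [SeminormedAddCommGroup E]
    {f : (ℕ → α) → E} (hf : UniformContinuous f) :
    Tendsto (cylinderVariation f) atTop (𝓝 0) := by
  refine tendsto_order.2 ⟨fun l hl => .of_forall fun n => ?_, fun ε hε => ?_⟩
  · exact hl.trans_le (cylinderVariation_nonneg f n)
  have hV := hf (Metric.dist_mem_uniformity (half_pos hε))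
  filter_upwards [eventually_forall_eq_imp_mem_of_mem_uniformity hV] with n hn
  refine (cylinderVariation_le (half_pos hε).le fun ω τ h => ?_).trans_lt (half_lt_self hε)
  exact dist_eq_norm (f ω) (f τ) ▸ (hn ω τ h).le

end UniformContinuity

lemma norm_euclideanSpace_le_sum_norm {𝕜 ι : Type*} [RCLike 𝕜] [Fintype ι]
    (x : EuclideanSpace 𝕜 ι) : ‖x‖ ≤ ∑ j, ‖x j‖ := by
  rw [EuclideanSpace.norm_eq]
  exact Real.sqrt_le_iff.2 ⟨by positivity,
    Finset.sum_sq_le_sq_sum_of_nonneg fun j _ => norm_nonneg (x j)⟩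

section AlmostAdditive

variable {α E : Type*} [SeminormedAddCommGroup E]

/-- Almost additivity with constant `C` of a sequence `φ 1, φ 2, …` of functions on the full shift
over `α`, with values in a normed group; the iterate `σ^n` of the shift is written out as
`ω ↦ fun k => ω (k + n)`, and `φ 0` is unconstrained. -/
def IsAlmostAdditiveWith (C : NNReal) (φ : ℕ → (ℕ → α) → E) : Prop :=
  ∀ n p : ℕ, 1 ≤ n → 1 ≤ p → ∀ ω : ℕ → α,
    ‖φ (n + p) ω - (φ n ω + φ p (fun k => ω (k + n)))‖ ≤ C

lemma isAlmostAdditiveWith_real_iff {C : NNReal} {φ : ℕ → (ℕ → α) → ℝ} :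
    IsAlmostAdditiveWith C φ ↔ ∀ n p : ℕ, 1 ≤ n → 1 ≤ p → ∀ ω : ℕ → α,
      -C + φ n ω + φ p (fun k => ω (k + n)) ≤ φ (n + p) ω ∧
        φ (n + p) ω ≤ φ n ω + φ p (fun k => ω (k + n)) + C := by
  simp only [IsAlmostAdditiveWith, Real.norm_eq_abs, abs_sub_le_iff]
  grind

lemma isAlmostAdditiveWith_sum_of_coord {𝕜 ι : Type*} [RCLike 𝕜] [Fintype ι] {C : ι → NNReal}
    {φ : ℕ → (ℕ → α) → EuclideanSpace 𝕜 ι}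
    (hφ : ∀ j, IsAlmostAdditiveWith (C j) fun n ω => φ n ω j) :
    IsAlmostAdditiveWith (∑ j, C j) φ := fun n p hn hp ω => by
  rw [NNReal.coe_sum]
  exact (norm_euclideanSpace_le_sum_norm _).trans
    (Finset.sum_le_sum fun j _ => hφ j n p hn hp ω)

variable {C : NNReal} {φ : ℕ → (ℕ → α) → E}

lemma IsAlmostAdditiveWith.norm_sub_add_le (hφ : IsAlmostAdditiveWith C φ) {p q : ℕ}
    (hp : 1 ≤ p) (hq : 1 ≤ q) (ω τ : ℕ → α) :
    ‖φ (p + q) ω - φ (p + q) τ‖ ≤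
      ‖φ p ω - φ p τ‖ + ‖φ q (fun k => ω (k + p)) - φ q (fun k => τ (k + p))‖ + 2 * C := by
  let defect (ω : ℕ → α) : E := φ (p + q) ω - (φ p ω + φ q (fun k => ω (k + p)))
  calc ‖φ (p + q) ω - φ (p + q) τ‖
      = ‖(φ p ω - φ p τ) + (φ q (fun k => ω (k + p)) - φ q (fun k => τ (k + p)))
          + (defect ω - defect τ)‖ := by
        congr 1
        simp only [defect]
        abel
    _ ≤ ‖φ p ω - φ p τ‖ + ‖φ q (fun k => ω (k + p)) - φ q (fun k => τ (k + p))‖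
          + ‖defect ω - defect τ‖ := norm_add₃_le
    _ ≤ ‖φ p ω - φ p τ‖ + ‖φ q (fun k => ω (k + p)) - φ q (fun k => τ (k + p))‖ + 2 * C := by
        gcongr
        rw [two_mul]
        exact norm_sub_le_of_le (hφ p q hp hq ω) (hφ p q hp hq τ)

lemma IsAlmostAdditiveWith.cylinderVariation_add_le (hφ : IsAlmostAdditiveWith C φ) {p q : ℕ}
    (hp : 1 ≤ p) (hq : 1 ≤ q) (hp_bdd : Bornology.IsBounded (Set.range (φ p)))
    (hq_bdd : Bornology.IsBounded (Set.range (φ q))) :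
    cylinderVariation (φ (p + q)) (p + q) ≤
      cylinderVariation (φ p) (p + q) + cylinderVariation (φ q) q + 2 * C := by
  have hp₀ := cylinderVariation_nonneg (φ p) (p + q)
  have hq₀ := cylinderVariation_nonneg (φ q) q
  refine cylinderVariation_le (by positivity) fun ω τ h => ?_
  refine (hφ.norm_sub_add_le hp hq ω τ).trans ?_
  gcongr
  · exact norm_sub_le_cylinderVariation hp_bdd h
  · exact norm_sub_le_cylinderVariation hq_bdd fun i hi => h (i + p) (by omega)

lemma IsAlmostAdditiveWith.eventually_cylinderVariation_add_le [UniformSpace α]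
    (hφ : IsAlmostAdditiveWith C φ) (hbdd : ∀ n, 1 ≤ n → Bornology.IsBounded (Set.range (φ n)))
    {p : ℕ} (hp : 1 ≤ p) (huc : UniformContinuous (φ p)) :
    ∀ᶠ q in atTop, cylinderVariation (φ (p + q)) (p + q) ≤
      cylinderVariation (φ q) q + (2 * C + 1) := by
  have hsmall : ∀ᶠ q in atTop, cylinderVariation (φ p) (p + q) < 1 :=
    (tendsto_atTop_mono (fun q => Nat.le_add_left q p) tendsto_id).eventually <|
      (tendsto_cylinderVariation_of_uniformContinuous huc).eventually_lt_const one_pos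
  filter_upwards [hsmall, eventually_ge_atTop 1] with q hq₁ hq
  linarith [hφ.cylinderVariation_add_le hp hq (hbdd p hp) (hbdd q hq)]

theorem almost_additive_variation_tendsto_zero_general [UniformSpace α]
    (hφ : IsAlmostAdditiveWith C φ) (huc : ∀ n, 1 ≤ n → UniformContinuous (φ n))
    (hbdd : ∀ n, 1 ≤ n → Bornology.IsBounded (Set.range (φ n))) :
    Tendsto (fun n : ℕ => (1 / (n : ℝ)) * cylinderVariation (φ n) n) atTop (𝓝 0) := by
  simpa only [one_div_mul_eq_div] using tendsto_div_atTop_zero_of_eventually_add_le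
    (fun n => cylinderVariation_nonneg (φ n) n)
    fun p hp => hφ.eventually_cylinderVariation_add_le hbdd hp (huc p hp)

end AlmostAdditive

/-- For an `ℝ^d`-valued almost additive sequence `Φ` on the full shift
`Σ = {1,…,m}^ℕ` (shift `σ`), the `n`-th variations satisfy `lim_{n→∞} (1/n) ‖Φ‖_n = 0`,
where `‖Φ‖_n = sup {|φ_n(ω) − φ_n(τ)| : ω, τ agree on the first n coordinates}` and
`|·|` is the Euclidean norm on `ℝ^d`. -/
theorem almost_additive_variation_tendsto_zero
    (m : ℕ) (hm : 2 ≤ m) (d : ℕ)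
    (φ : ℕ → (ℕ → Fin m) → EuclideanSpace ℝ (Fin d))
    (hφcont : ∀ n, 1 ≤ n → Continuous (φ n))
    (haa : ∀ j : Fin d, ∃ C : ℝ, 0 < C ∧ ∀ n p : ℕ, 1 ≤ n → 1 ≤ p → ∀ ω : ℕ → Fin m,
      -C + φ n ω j + φ p (fun k => ω (k + n)) j ≤ φ (n + p) ω j ∧
        φ (n + p) ω j ≤ φ n ω j + φ p (fun k => ω (k + n)) j + C) :
    Tendsto (fun n : ℕ => (1 / (n : ℝ)) *
        sSup {r : ℝ | ∃ ω τ : ℕ → Fin m,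
          (∀ i < n, ω i = τ i) ∧ r = ‖φ n ω - φ n τ‖})
      atTop (𝓝 0) := by
  choose C hC₀ hC using haa
  lift C to Fin d → NNReal using fun j => (hC₀ j).le
  have hφ : IsAlmostAdditiveWith (∑ j, C j) φ :=
    isAlmostAdditiveWith_sum_of_coord fun j => isAlmostAdditiveWith_real_iff.2 (hC j)
  let _ : UniformSpace (Fin m) := uniformSpaceOfCompactR1
  exact almost_additive_variation_tendsto_zero_general hφ
    (fun n hn => CompactSpace.uniformContinuous_of_continuous (hφcont n hn))
    fun n hn => (isCompact_range (hφcont n hn)).isBounded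
end

section
/- In the piecewise expanding interval setting (possibly with parabolic fixed points), the diameters of the cylinder intervals tend to 0 uniformly: lim_{n→∞} sup_{ω ∈ Σ} D_n(ω) = 0, where D_n(ω) = diam(T_{ω_1}∘T_{ω_2}∘⋯∘T_{ω_n}([0,1])). -/
/-!
A map of a compact set that strictly decreases distances decreases every distance `≥ ε` by at least
some fixed `δ > 0`, and `δ` can be chosen common to finitely many such maps. A composition of `n` of
them, in any order, therefore brings two points at distance `d` to distance at most
`max ε (d - n δ)`, which is `ε` once `n δ` exceeds the diameter of the set.

The inverse branches strictly decrease distances, parabolic fixed points notwithstanding: a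
differentiable map `f` with `|f'| ≤ 1` is nonexpanding, and a segment whose length it preserved
could not contain a point at which `|f'| < 1`, while every segment contains such points.
-/

open Filter Topology

/-- Composition `T_{ω_1} ∘ T_{ω_2} ∘ ⋯ ∘ T_{ω_n}` of the first `n` inverse branches
along the symbol sequence `ω` (0-indexed: `T (ω 0) ∘ ⋯ ∘ T (ω (n-1))`). -/
def branchComp {m : ℕ} (T : Fin m → ℝ → ℝ) (ω : ℕ → Fin m) : ℕ → ℝ → ℝ
  | 0 => id
  | n + 1 => branchComp T ω n ∘ T (ω n)

/-- The cylinder interval `I_n(ω) = T_{ω_1} ∘ ⋯ ∘ T_{ω_n} ([0,1])`. -/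
def cylSet {m : ℕ} (T : Fin m → ℝ → ℝ) (ω : ℕ → Fin m) (n : ℕ) : Set ℝ :=
  branchComp T ω n '' Set.Icc 0 1

section Contractive

variable {X Y : Type*} [MetricSpace X] [PseudoMetricSpace Y] {f : X → Y} {s : Set X}

/-- Contractive maps in the sense of Edelstein: `f` strictly decreases the distance between any two
distinct points of `s`. Unlike for `ContractingWith`, no Lipschitz constant below `1` is
required. -/
def ContractiveOn (f : X → Y) (s : Set X) : Prop :=
  s.Pairwise fun x y ↦ dist (f x) (f y) < dist x y

namespace ContractiveOn

lemma dist_le (hf : ContractiveOn f s) {x y : X} (hx : x ∈ s) (hy : y ∈ s) :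
    dist (f x) (f y) ≤ dist x y := by
  rcases eq_or_ne x y with rfl | hxy
  · simp
  · exact (hf hx hy hxy).le

protected lemma continuousOn (hf : ContractiveOn f s) : ContinuousOn f s :=
  (LipschitzOnWith.mk_one fun _ hx _ hy ↦ hf.dist_le hx hy).continuousOn

lemma exists_dist_le_dist_sub (hf : ContractiveOn f s) (hs : IsCompact s) {ε : ℝ} (hε : 0 < ε) :
    ∃ δ > 0, ∀ x ∈ s, ∀ y ∈ s, ε ≤ dist x y → dist (f x) (f y) ≤ dist x y - δ := by
  let K : Set (X × X) := s ×ˢ s ∩ {q | ε ≤ dist q.1 q.2}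
  have hK : IsCompact K :=
    (hs.prod hs).inter_right (isClosed_le continuous_const continuous_dist)
  have hcont : ContinuousOn (fun q : X × X ↦ dist q.1 q.2 - dist (f q.1) (f q.2)) K :=
    continuous_dist.continuousOn.sub <| continuous_dist.comp_continuousOn <|
      (hf.continuousOn.prodMap hf.continuousOn).mono Set.inter_subset_left
  have hdrop : ∀ q ∈ K, 0 < dist q.1 q.2 - dist (f q.1) (f q.2) := fun q hq ↦
    sub_pos.2 (hf hq.1.1 hq.1.2 (dist_pos.1 (hε.trans_le hq.2)))
  obtain ⟨δ, hδ, hle⟩ := hK.exists_forall_le' hcont hdrop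
  exact ⟨δ, hδ, fun x hx y hy hxy ↦ le_sub_comm.1 (hle (x, y) ⟨⟨hx, hy⟩, hxy⟩)⟩

lemma eventually_dist_le_max (hf : ContractiveOn f s) (hs : IsCompact s) {ε : ℝ} (hε : 0 < ε) :
    ∀ᶠ δ in 𝓝 (0 : ℝ), ∀ x ∈ s, ∀ y ∈ s, dist (f x) (f y) ≤ max ε (dist x y - δ) := by
  obtain ⟨δ₀, hδ₀, hdrop⟩ := hf.exists_dist_le_dist_sub hs hε
  filter_upwards [Iic_mem_nhds hδ₀] with δ hδ x hx y hy
  rcases le_total ε (dist x y) with hxy | hxy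
  · exact le_max_of_le_right ((hdrop x hx y hy hxy).trans (sub_le_sub_left hδ _))
  · exact le_max_of_le_left ((hf.dist_le hx hy).trans hxy)

end ContractiveOn

end Contractive

section Derivative

variable {F : Type*} [NormedAddCommGroup F] [NormedSpace ℝ F] {s : Set ℝ}

lemma eventually_dist_lt_of_norm_hasDerivWithin_lt_one {f : ℝ → F} {f' : F} {z : ℝ}
    (hf : HasDerivWithinAt f f' s z) (hf' : ‖f'‖ < 1) :
    ∀ᶠ w in 𝓝[s \ {z}] z, dist (f z) (f w) < dist z w := by
  filter_upwards [nhdsWithin_mono z Set.sdiff_subset (hf.limsup_norm_slope_le hf'),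
    self_mem_nhdsWithin] with w hslope hw
  rw [inv_mul_lt_one₀ (norm_pos_iff.2 (sub_ne_zero.2 hw.2))] at hslope
  simpa only [dist_eq_norm, norm_sub_rev] using hslope

lemma exists_dist_lt_of_dense_norm_lt_one {f f' : ℝ → F} {a b : ℝ} (hab : a < b)
    (hsub : Set.Ioo a b ⊆ s) (hf : ∀ x ∈ s, HasDerivWithinAt f (f' x) s x)
    (hdense : Dense {x | x ∈ s → ‖f' x‖ < 1}) :
    ∃ z w, a < z ∧ z < w ∧ w < b ∧ dist (f z) (f w) < dist z w := by
  obtain ⟨z, hz, hz'⟩ := hdense.inter_open_nonempty _ isOpen_Ioo (Set.nonempty_Ioo.2 hab)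
  have hright : 𝓝[>] z ≤ 𝓝[s \ {z}] z := by
    rw [← nhdsWithin_Ioo_eq_nhdsGT hz.2]
    exact nhdsWithin_mono z fun w hw ↦ ⟨hsub ⟨hz.1.trans hw.1, hw.2⟩, hw.1.ne'⟩
  have hshrink : ∀ᶠ w in 𝓝[>] z, dist (f z) (f w) < dist z w := hright
    (eventually_dist_lt_of_norm_hasDerivWithin_lt_one (hf z (hsub hz)) (hz' (hsub hz)))
  obtain ⟨w, hzw, hw⟩ := (hshrink.and (Ioo_mem_nhdsGT hz.2)).exists
  exact ⟨z, w, hz.1, hw.1, hw.2, hzw⟩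

lemma contractiveOn_of_norm_hasDerivWithin_le_one {f f' : ℝ → F} (hs : Convex ℝ s)
    (hf : ∀ x ∈ s, HasDerivWithinAt f (f' x) s x) (hle : ∀ x ∈ s, ‖f' x‖ ≤ 1)
    (hdense : Dense {x | x ∈ s → ‖f' x‖ < 1}) : ContractiveOn f s := by
  intro x hx y hy hxy
  wlog hlt : x < y generalizing x y
  · simpa only [dist_comm] using this hy hx hxy.symm (hxy.lt_or_gt.resolve_left hlt)
  have hIcc : Set.Icc x y ⊆ s := hs.ordConnected.out hx hy
  have hnonexp : ∀ u ∈ s, ∀ v ∈ s, dist (f u) (f v) ≤ dist u v := fun u hu v hv ↦ by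
    simpa only [dist_eq_norm, one_mul] using
      hs.norm_image_sub_le_of_norm_hasDerivWithin_le hf hle hv hu
  obtain ⟨z, w, hxz, hzw, hwy, hshrink⟩ := exists_dist_lt_of_dense_norm_lt_one hlt
    (Set.Ioo_subset_Icc_self.trans hIcc) hf hdense
  have hz : z ∈ s := hIcc ⟨hxz.le, (hzw.trans hwy).le⟩
  have hw : w ∈ s := hIcc ⟨(hxz.trans hzw).le, hwy.le⟩
  calc dist (f x) (f y)
    _ ≤ dist (f x) (f z) + dist (f z) (f w) + dist (f w) (f y) := dist_triangle4 ..
    _ < dist x z + dist z w + dist w y :=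
      add_lt_add_of_lt_of_le (add_lt_add_of_le_of_lt (hnonexp x hx z hz) hshrink)
        (hnonexp w hw y hy)
    _ = dist x y := by grind [Real.dist_eq]

end Derivative

section BranchComp

variable {m : ℕ} {T : Fin m → ℝ → ℝ} {K : Set ℝ}

lemma dist_branchComp_le_max {ε δ : ℝ} (hδ : 0 ≤ δ) (hmaps : ∀ i, Set.MapsTo (T i) K K)
    (hdrop : ∀ i, ∀ x ∈ K, ∀ y ∈ K, dist (T i x) (T i y) ≤ max ε (dist x y - δ))
    (ω : ℕ → Fin m) (n : ℕ) {x y : ℝ} (hx : x ∈ K) (hy : y ∈ K) :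
    dist (branchComp T ω n x) (branchComp T ω n y) ≤ max ε (dist x y - n * δ) := by
  induction n generalizing x y with
  | zero => simp [branchComp]
  | succ n ih =>
    calc dist (branchComp T ω n (T (ω n) x)) (branchComp T ω n (T (ω n) y))
      _ ≤ max ε (dist (T (ω n) x) (T (ω n) y) - n * δ) := ih (hmaps _ hx) (hmaps _ hy)
      _ ≤ max ε (max ε (dist x y - δ) - n * δ) := by gcongr; exact hdrop _ x hx y hy
      _ = max ε (dist x y - (n + 1 : ℕ) * δ) := by
        rw [← max_sub_sub_right, ← max_assoc, max_eq_left (sub_le_self ε (by positivity)),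
          sub_sub, Nat.cast_succ, add_one_mul, add_comm δ]

lemma eventually_diam_image_branchComp_le (hK : IsCompact K)
    (hmaps : ∀ i, Set.MapsTo (T i) K K) (hT : ∀ i, ContractiveOn (T i) K) {ε : ℝ} (hε : 0 < ε) :
    ∀ᶠ n in atTop, ∀ ω, Metric.diam (branchComp T ω n '' K) ≤ ε := by
  obtain ⟨δ, hδ, hdrop⟩ : ∃ δ > 0, ∀ i, ∀ x ∈ K, ∀ y ∈ K,
      dist (T i x) (T i y) ≤ max ε (dist x y - δ) :=
    (eventually_all.2 fun i ↦ (hT i).eventually_dist_le_max hK hε).exists_gt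
  have hlarge : ∀ᶠ n : ℕ in atTop, Metric.diam K ≤ n * δ :=
    (tendsto_natCast_atTop_atTop.atTop_mul_const hδ).eventually_ge_atTop _
  filter_upwards [hlarge] with n hn ω
  refine Metric.diam_le_of_forall_dist_le hε.le ?_
  rintro _ ⟨x, hx, rfl⟩ _ ⟨y, hy, rfl⟩
  have hxy : dist x y ≤ n * δ := (Metric.dist_le_diam_of_mem hK.isBounded hx hy).trans hn
  exact (dist_branchComp_le_max hδ.le hmaps hdrop ω n hx hy).trans (max_le le_rfl (by linarith))

lemma tendsto_iSup_diam_image_branchComp (hK : IsCompact K)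
    (hmaps : ∀ i, Set.MapsTo (T i) K K) (hT : ∀ i, ContractiveOn (T i) K) :
    Tendsto (fun n ↦ ⨆ ω, Metric.diam (branchComp T ω n '' K)) atTop (𝓝 0) := by
  refine Metric.nhds_basis_closedBall.tendsto_right_iff.2 fun ε hε ↦ ?_
  filter_upwards [eventually_diam_image_branchComp_le hK hmaps hT hε] with n hn
  rw [mem_closedBall_zero_iff, Real.norm_of_nonneg (Real.iSup_nonneg fun _ ↦ Metric.diam_nonneg)]
  exact Real.iSup_le hn hε.le

end BranchComp

theorem cylinder_diam_tendsto_zero_general {m : ℕ} {T T' : Fin m → ℝ → ℝ}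
    (hmaps : ∀ i, Set.MapsTo (T i) (Set.Icc 0 1) (Set.Icc 0 1))
    (hderiv : ∀ i, ∀ y ∈ Set.Icc (0 : ℝ) 1, HasDerivWithinAt (T i) (T' i y) (Set.Icc 0 1) y)
    (hle : ∀ i, ∀ y ∈ Set.Icc (0 : ℝ) 1, |T' i y| ≤ 1)
    (hdense : ∀ i, Dense {y | y ∈ Set.Icc (0 : ℝ) 1 → |T' i y| < 1}) :
    Tendsto (fun n ↦ ⨆ ω, Metric.diam (cylSet T ω n)) atTop (𝓝 0) :=
  tendsto_iSup_diam_image_branchComp isCompact_Icc hmaps fun i ↦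
    contractiveOn_of_norm_hasDerivWithin_le_one (convex_Icc 0 1) (hderiv i) (hle i) (hdense i)

/-- In the piecewise expanding interval setting (possibly with parabolic
fixed points), the diameters of cylinder intervals tend to 0 uniformly:
`lim_{n→∞} sup_{ω ∈ Σ} D_n(ω) = 0` where `D_n(ω) = diam I_n(ω)`. -/
theorem cylinder_diam_tendsto_zero
    (m : ℕ) (hm : 2 ≤ m)
    (I : Fin m → Set ℝ) (T : Fin m → ℝ → ℝ) (T' : Fin m → ℝ → ℝ) (xfix : Fin m → ℝ)
    (hI : ∀ i, ∃ a b : ℝ, a < b ∧ 0 ≤ a ∧ b ≤ 1 ∧ I i = Set.Icc a b)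
    (hdisj : ∀ i j, i ≠ j → Disjoint (interior (I i)) (interior (I j)))
    (hbij : ∀ i, Set.BijOn (T i) (Set.Icc 0 1) (I i))
    (hderiv : ∀ i, ∀ y ∈ Set.Icc (0:ℝ) 1, HasDerivWithinAt (T i) (T' i y) (Set.Icc 0 1) y)
    (hT'cont : ∀ i, ContinuousOn (T' i) (Set.Icc 0 1))
    (hT'pos : ∀ i, ∀ y ∈ Set.Icc (0:ℝ) 1, 0 < T' i y)
    (hT'le : ∀ i, ∀ y ∈ Set.Icc (0:ℝ) 1, T' i y ≤ 1)
    (hxmem : ∀ i, xfix i ∈ I i)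
    (hxfix : ∀ i, T i (xfix i) = xfix i)
    (hxuniq : ∀ i, ∀ y ∈ Set.Icc (0:ℝ) 1, T i y = y → y = xfix i)
    (hT'lt : ∀ i, ∀ y ∈ Set.Icc (0:ℝ) 1, y ≠ xfix i → T' i y < 1) :
    Tendsto (fun n : ℕ => ⨆ ω : ℕ → Fin m, Metric.diam (cylSet T ω n)) atTop (𝓝 0) := by
  have hmaps : ∀ i, Set.MapsTo (T i) (Set.Icc 0 1) (Set.Icc 0 1) := fun i ↦ by
    obtain ⟨a, b, -, ha, hb, hIab⟩ := hI i
    exact (hbij i).mapsTo.mono_right (hIab ▸ Set.Icc_subset_Icc ha hb)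
  have habs : ∀ i, ∀ y ∈ Set.Icc (0 : ℝ) 1, |T' i y| = T' i y := fun i y hy ↦
    abs_of_pos (hT'pos i y hy)
  exact cylinder_diam_tendsto_zero_general hmaps hderiv
    (fun i y hy ↦ (habs i y hy).trans_le (hT'le i y hy)) fun i ↦
      (dense_compl_singleton (xfix i)).mono fun y hne hy ↦ (habs i y hy).trans_lt (hT'lt i y hy hne)
end

section
/- In the piecewise expanding interval setting (possibly with parabolic fixed points), with Π the coding map and g(ω) := −log T_{ω_1}′(Π(σω)), one has lim_{n→∞} sup_{ω ∈ Σ} | −(1/n) log D_n(ω) − A_n g(ω) | = 0, where A_n g(ω) := (1/n) ∑_{j=0}^{n−1} g(σ^j ω). -/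
/-!
Put `φ n ω = -log D_n(ω)`. Since `I_{n+1}(ω)` is the image of `I_n(σω)` under `T_{ω_1}`, the
mean value theorem gives `φ (n + 1) ω - φ n (σω) = -log |T'_{ω_1}(ξ)|` for some `ξ ∈ I_n(σω)`,
an interval that also contains `Π(σω)`. Once `sup_ω D_n(ω) → 0` is known, uniform continuity of
`log |T'_i|` makes the right-hand side converge to `g ω` uniformly. Telescoping along the orbit
of `ω`, the difference between `φ n` and the Birkhoff sum of `g` is a sum of `n` such errors,
and these tend to zero in the Cesàro sense.

The decay of `D_n` need not be exponential, because `T'_i` may equal `1` at a parabolic point.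
Still, `T_i` strictly decreases distances, so by compactness it shortens all distances of at
least `ε` by a definite amount `δ`; hence `D_n(ω) ≤ max ε (1 - n δ)`.
-/

open Filter Topology

section UniformConvergence

variable {ι X E : Type*} [SeminormedAddCommGroup E] {F : ι → X → E} {l : Filter ι}

lemma tendstoUniformly_zero_iff_norm_lt :
    TendstoUniformly F 0 l ↔ ∀ ε > 0, ∀ᶠ i in l, ∀ x, ‖F i x‖ < ε := by
  simp only [← tendstoUniformlyOn_univ, SeminormedAddGroup.tendstoUniformlyOn_zero, Set.mem_univ,
    true_imp_iff]

lemma tendstoUniformly_zero_of_norm_le {a : ι → ℝ} (hF : ∀ i x, ‖F i x‖ ≤ a i)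
    (ha : Tendsto a l (𝓝 0)) : TendstoUniformly F 0 l :=
  tendstoUniformly_zero_iff_norm_lt.2 fun _ hε =>
    (ha.eventually_lt_const hε).mono fun i hi x => (hF i x).trans_lt hi

lemma tendsto_iSup_norm_of_tendstoUniformly_zero (hF : TendstoUniformly F 0 l) :
    Tendsto (fun i => ⨆ x, ‖F i x‖) l (𝓝 0) := by
  refine Metric.tendsto_nhds.2 fun ε hε => ?_
  filter_upwards [tendstoUniformly_zero_iff_norm_lt.1 hF (ε / 2) (half_pos hε)] with i hi
  rw [Real.dist_0_eq_abs, abs_of_nonneg (Real.iSup_nonneg fun x => norm_nonneg (F i x))]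
  exact (Real.iSup_le (fun x => (hi x).le) (half_pos hε).le).trans_lt (half_lt_self hε)

end UniformConvergence

section AlmostBirkhoffSums

variable {X E : Type*} {σ : X → X} {φ : ℕ → X → E} {g : X → E}

lemma norm_sub_birkhoffSum_le [SeminormedAddCommGroup E] {C : ℝ} {c : ℕ → ℝ}
    (hφ₀ : ∀ x, ‖φ 0 x‖ ≤ C) (hφ : ∀ n x, ‖φ (n + 1) x - φ n (σ x) - g x‖ ≤ c n) (n : ℕ) (x : X) :
    ‖φ n x - birkhoffSum σ g n x‖ ≤ C + ∑ k ∈ Finset.range n, c k := by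
  induction n generalizing x with
  | zero => simpa using hφ₀ x
  | succ n ih =>
    calc ‖φ (n + 1) x - birkhoffSum σ g (n + 1) x‖
        = ‖(φ n (σ x) - birkhoffSum σ g n (σ x)) + (φ (n + 1) x - φ n (σ x) - g x)‖ := by
          rw [birkhoffSum_succ']
          congr 1
          abel
      _ ≤ (C + ∑ k ∈ Finset.range n, c k) + c n := norm_add_le_of_le (ih (σ x)) (hφ n x)
      _ = C + ∑ k ∈ Finset.range (n + 1), c k := by rw [Finset.sum_range_succ, add_assoc]

theorem tendstoUniformly_inv_smul_sub_birkhoffAverage [SeminormedAddCommGroup E] [NormedSpace ℝ E]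
    {C : ℝ} (hφ₀ : ∀ x, ‖φ 0 x‖ ≤ C)
    (hbdd : ∀ n, BddAbove (Set.range fun x => ‖φ (n + 1) x - φ n (σ x) - g x‖))
    (hφ : TendstoUniformly (fun n x => φ (n + 1) x - φ n (σ x) - g x) 0 atTop) :
    TendstoUniformly (fun (n : ℕ) x => (n : ℝ)⁻¹ • φ n x - birkhoffAverage ℝ σ g n x) 0 atTop := by
  set c : ℕ → ℝ := fun n => ⨆ x, ‖φ (n + 1) x - φ n (σ x) - g x‖
  have hc : Tendsto c atTop (𝓝 0) := tendsto_iSup_norm_of_tendstoUniformly_zero hφ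
  refine tendstoUniformly_zero_of_norm_le
    (a := fun n : ℕ => (n : ℝ)⁻¹ * (C + ∑ k ∈ Finset.range n, c k)) (fun n x => ?_) ?_
  · rw [birkhoffAverage, ← smul_sub, norm_smul, norm_inv, RCLike.norm_natCast]
    gcongr
    exact norm_sub_birkhoffSum_le hφ₀ (fun k y => le_ciSup (hbdd k) y) n x
  · simpa only [mul_add, zero_mul, add_zero] using
      (tendsto_inv_atTop_nhds_zero_nat.mul_const C).add hc.cesaro

end AlmostBirkhoffSums

section StrictContraction

variable {X Y : Type*} [MetricSpace X] [PseudoMetricSpace Y] {s : Set X} {f : X → Y} {ε : ℝ}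

lemma eventually_dist_map_le_dist_sub (hs : IsCompact s)
    (hf : ∀ x ∈ s, ∀ y ∈ s, x ≠ y → dist (f x) (f y) < dist x y) (hε : 0 < ε) :
    ∀ᶠ δ in 𝓝[>] (0 : ℝ), ∀ x ∈ s, ∀ y ∈ s, ε ≤ dist x y → dist (f x) (f y) ≤ dist x y - δ := by
  have hf_cont : ContinuousOn f s := by
    refine (LipschitzOnWith.of_dist_le_mul (K := 1) fun x hx y hy => ?_).continuousOn
    rcases eq_or_ne x y with rfl | hxy
    · simp
    · simpa using (hf x hx y hy hxy).le
  let K : Set (X × X) := s ×ˢ s ∩ {q | ε ≤ dist q.1 q.2}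
  have hK : IsCompact K := (hs.prod hs).inter_right (isClosed_le continuous_const continuous_dist)
  have hgap_cont : ContinuousOn (fun q : X × X => dist q.1 q.2 - dist (f q.1) (f q.2)) K :=
    continuous_dist.continuousOn.sub <|
      continuous_dist.comp_continuousOn <|
        (hf_cont.comp continuousOn_fst fun _ hq => hq.1.1).prodMk
          (hf_cont.comp continuousOn_snd fun _ hq => hq.1.2)
  obtain ⟨δ₀, hδ₀, hgap⟩ := hK.exists_forall_le' hgap_cont (a := 0) fun q hq =>
    sub_pos.2 (hf _ hq.1.1 _ hq.1.2 (dist_pos.1 (hε.trans_le hq.2)))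
  filter_upwards [Ioo_mem_nhdsGT hδ₀] with δ hδ x hx y hy hxy
  linarith [hgap (x, y) ⟨⟨hx, hy⟩, hxy⟩, hδ.2]

lemma eventually_diam_image_le_max (hs : IsCompact s)
    (hf : ∀ x ∈ s, ∀ y ∈ s, x ≠ y → dist (f x) (f y) < dist x y) (hε : 0 < ε) :
    ∀ᶠ δ in 𝓝[>] (0 : ℝ), ∀ A ⊆ s, Metric.diam (f '' A) ≤ max ε (Metric.diam A - δ) := by
  filter_upwards [eventually_dist_map_le_dist_sub hs hf hε] with δ hδ A hA
  refine Metric.diam_le_of_forall_dist_le (le_max_of_le_left hε.le) ?_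
  rintro _ ⟨x, hx, rfl⟩ _ ⟨y, hy, rfl⟩
  rcases le_or_gt ε (dist x y) with hxy | hxy
  · exact le_max_of_le_right <| (hδ x (hA hx) y (hA hy) hxy).trans <|
      sub_le_sub_right (Metric.dist_le_diam_of_mem (hs.isBounded.subset hA) hx hy) δ
  · refine le_max_of_le_left ?_
    rcases eq_or_ne x y with rfl | hne
    · simpa using hε.le
    · exact ((hf x (hA hx) y (hA hy) hne).trans hxy).le

end StrictContraction

section Derivative

variable {f f' : ℝ → ℝ} {a b p : ℝ}

lemma strictMonoOn_Icc_of_hasDerivWithinAt_pos_of_ne (hp : p ∈ Set.Icc a b)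
    (hf : ∀ y ∈ Set.Icc a b, HasDerivWithinAt f (f' y) (Set.Icc a b) y)
    (hf' : ∀ y ∈ Set.Icc a b, y ≠ p → 0 < f' y) : StrictMonoOn f (Set.Icc a b) := by
  have avoiding : ∀ c d, a ≤ c → d ≤ b → p ∉ Set.Ioo c d → StrictMonoOn f (Set.Icc c d) := by
    intro c d hac hdb hp
    refine strictMonoOn_of_deriv_pos (convex_Icc c d)
      (fun y hy => (hf y (Set.Icc_subset_Icc hac hdb hy)).continuousWithinAt.mono
        (Set.Icc_subset_Icc hac hdb)) fun y hy => ?_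
    rw [interior_Icc] at hy
    have hy' : y ∈ Set.Ioo a b := Set.Ioo_subset_Ioo hac hdb hy
    rw [((hf y (Set.Ioo_subset_Icc_self hy')).hasDerivAt (Icc_mem_nhds hy'.1 hy'.2)).deriv]
    exact hf' y (Set.Ioo_subset_Icc_self hy') fun h => hp (h ▸ hy)
  rw [← Set.Icc_union_Icc_eq_Icc hp.1 hp.2]
  exact (avoiding a p le_rfl hp.2 fun h => h.2.false).union
    (avoiding p b hp.1 le_rfl fun h => h.1.false) (isGreatest_Icc hp.1) (isLeast_Icc hp.2)

lemma dist_map_lt_dist_of_abs_deriv_lt_one_of_ne (hp : p ∈ Set.Icc a b)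
    (hf : ∀ y ∈ Set.Icc a b, HasDerivWithinAt f (f' y) (Set.Icc a b) y)
    (hf' : ∀ y ∈ Set.Icc a b, y ≠ p → |f' y| < 1) {x y : ℝ} (hx : x ∈ Set.Icc a b)
    (hy : y ∈ Set.Icc a b) (hxy : x ≠ y) : dist (f x) (f y) < dist x y := by
  have hsub : StrictMonoOn (fun y => y - f y) (Set.Icc a b) :=
    strictMonoOn_Icc_of_hasDerivWithinAt_pos_of_ne hp
      (fun y hy => (hasDerivWithinAt_id y _).sub (hf y hy))
      fun y hy hyp => sub_pos.2 (abs_lt.1 (hf' y hy hyp)).2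
  have hadd : StrictMonoOn (fun y => y + f y) (Set.Icc a b) :=
    strictMonoOn_Icc_of_hasDerivWithinAt_pos_of_ne hp
      (fun y hy => (hasDerivWithinAt_id y _).add (hf y hy))
      fun y hy hyp => by linarith [(abs_lt.1 (hf' y hy hyp)).1]
  wlog hlt : x < y generalizing x y
  · simpa only [dist_comm] using this hy hx hxy.symm (hxy.lt_or_gt.resolve_left hlt)
  rw [dist_comm x y, dist_comm (f x), Real.dist_eq, Real.dist_eq, abs_of_pos (sub_pos.2 hlt),
    abs_lt]
  constructor
  · linarith [hadd hx hy hlt]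
  · linarith [hsub hx hy hlt]

lemma exists_image_Icc_eq_Icc_of_deriv_ne_zero (hab : a < b)
    (hf : ∀ y ∈ Set.Icc a b, HasDerivWithinAt f (f' y) (Set.Icc a b) y)
    (hf' : ∀ y ∈ Set.Icc a b, f' y ≠ 0) :
    ∃ c d, c < d ∧ f '' Set.Icc a b = Set.Icc c d ∧
      ∃ ξ ∈ Set.Icc a b, d - c = |f' ξ| * (b - a) := by
  have hcont : ContinuousOn f (Set.Icc a b) := fun y hy => (hf y hy).continuousWithinAt
  have hint : ∀ y ∈ interior (Set.Icc a b), HasDerivWithinAt f (f' y) (interior (Set.Icc a b)) y :=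
    fun y hy => (hf y (interior_subset hy)).mono interior_subset
  obtain ⟨ξ, hξ, hslope⟩ := exists_hasDerivAt_eq_slope f f' hab hcont fun y hy =>
    (hf y (Set.Ioo_subset_Icc_self hy)).hasDerivAt (Icc_mem_nhds hy.1 hy.2)
  have hξ' : ξ ∈ Set.Icc a b := Set.Ioo_subset_Icc_self hξ
  rw [eq_div_iff (sub_pos.2 hab).ne'] at hslope
  rcases hasDerivWithinAt_forall_lt_or_forall_gt_of_forall_ne (convex_Icc a b) hf hf' with
    hneg | hpos
  · have hanti : StrictAntiOn f (Set.Icc a b) := strictAntiOn_of_hasDerivWithinAt_neg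
      (convex_Icc a b) hcont hint fun y hy => hneg y (interior_subset hy)
    refine ⟨f b, f a, hanti (Set.left_mem_Icc.2 hab.le) (Set.right_mem_Icc.2 hab.le) hab,
      hcont.image_Icc_of_antitoneOn hab.le hanti.antitoneOn, ξ, hξ', ?_⟩
    rw [abs_of_neg (hneg ξ hξ'), neg_mul, hslope, neg_sub]
  · have hmono : StrictMonoOn f (Set.Icc a b) := strictMonoOn_of_hasDerivWithinAt_pos
      (convex_Icc a b) hcont hint fun y hy => hpos y (interior_subset hy)
    refine ⟨f a, f b, hmono (Set.left_mem_Icc.2 hab.le) (Set.right_mem_Icc.2 hab.le) hab,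
      hcont.image_Icc_of_monotoneOn hab.le hmono.monotoneOn, ξ, hξ', ?_⟩
    rw [abs_of_pos (hpos ξ hξ'), hslope]

end Derivative

open SymbolicDynamics.FullShift (shift)

section Shift

variable {α : Type*}

lemma shift_one_eq (ω : ℕ → α) : shift 1 ω = fun k => ω (k + 1) :=
  funext fun k => congrArg ω (add_comm 1 k)

lemma shift_one_iterate (j : ℕ) (ω : ℕ → α) : (shift 1)^[j] ω = fun k => ω (k + j) := by
  induction j generalizing ω with
  | zero => rfl
  | succ j ih =>
    rw [Function.iterate_succ_apply, ih, shift_one_eq]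
    exact funext fun k => congrArg ω (add_assoc k j 1)

lemma birkhoffAverage_shift_one (g : (ℕ → α) → ℝ) (n : ℕ) (ω : ℕ → α) :
    birkhoffAverage ℝ (shift 1) g n ω
      = 1 / (n : ℝ) * ∑ j ∈ Finset.range n, g (fun k => ω (k + j)) := by
  simp only [birkhoffAverage, birkhoffSum, shift_one_iterate, smul_eq_mul, one_div]

end Shift

section Cylinders

variable {m : ℕ} {T T' : Fin m → ℝ → ℝ}

lemma cylSet_zero (T : Fin m → ℝ → ℝ) (ω : ℕ → Fin m) : cylSet T ω 0 = Set.Icc 0 1 :=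
  Set.image_id _

lemma branchComp_succ_eq_comp_shift (T : Fin m → ℝ → ℝ) (ω : ℕ → Fin m) (n : ℕ) :
    branchComp T ω (n + 1) = T (ω 0) ∘ branchComp T (shift 1 ω) n := by
  rw [shift_one_eq]
  induction n with
  | zero => rfl
  | succ n ih => exact congrArg (· ∘ T (ω (n + 1))) ih

lemma cylSet_succ (T : Fin m → ℝ → ℝ) (ω : ℕ → Fin m) (n : ℕ) :
    cylSet T ω (n + 1) = T (ω 0) '' cylSet T (shift 1 ω) n := by
  rw [cylSet, branchComp_succ_eq_comp_shift, Set.image_comp, cylSet]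

lemma cylSet_subset_Icc (hmaps : ∀ i, Set.MapsTo (T i) (Set.Icc 0 1) (Set.Icc 0 1))
    (ω : ℕ → Fin m) (n : ℕ) : cylSet T ω n ⊆ Set.Icc 0 1 := by
  induction n generalizing ω with
  | zero => exact (cylSet_zero T ω).subset
  | succ n ih =>
    rw [cylSet_succ]
    exact ((hmaps (ω 0)).mono_left (ih (shift 1 ω))).image_subset

lemma diam_cylSet_le_max (hmaps : ∀ i, Set.MapsTo (T i) (Set.Icc 0 1) (Set.Icc 0 1))
    {ε δ : ℝ} (hδ : 0 ≤ δ)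
    (hT : ∀ i, ∀ A ⊆ Set.Icc (0 : ℝ) 1, Metric.diam (T i '' A) ≤ max ε (Metric.diam A - δ))
    (ω : ℕ → Fin m) (n : ℕ) : Metric.diam (cylSet T ω n) ≤ max ε (1 - n * δ) := by
  induction n generalizing ω with
  | zero => simp [cylSet_zero, Real.diam_Icc]
  | succ n ih =>
    have hstep := hT (ω 0) _ (cylSet_subset_Icc hmaps (shift 1 ω) n)
    rw [← cylSet_succ] at hstep
    refine hstep.trans (max_le (le_max_left _ _) ?_)
    rcases le_max_iff.1 (ih (shift 1 ω)) with h | h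
    · exact le_max_of_le_left (by linarith)
    · exact le_max_of_le_right (by push_cast; linarith)

theorem tendstoUniformly_diam_cylSet
    (hmaps : ∀ i, Set.MapsTo (T i) (Set.Icc 0 1) (Set.Icc 0 1))
    (hcontr : ∀ i, ∀ x ∈ Set.Icc (0 : ℝ) 1, ∀ y ∈ Set.Icc (0 : ℝ) 1, x ≠ y →
      dist (T i x) (T i y) < dist x y) :
    TendstoUniformly (fun n ω => Metric.diam (cylSet T ω n)) 0 atTop := by
  refine tendstoUniformly_zero_iff_norm_lt.2 fun ε hε => ?_
  obtain ⟨δ, hT, hδ⟩ := ((eventually_all.2 fun i =>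
    eventually_diam_image_le_max isCompact_Icc (hcontr i) (half_pos hε)).and
      self_mem_nhdsWithin).exists
  obtain ⟨N, hN⟩ := exists_nat_gt (1 / δ)
  rw [div_lt_iff₀ hδ] at hN
  filter_upwards [eventually_ge_atTop N] with n hn ω
  rw [Real.norm_of_nonneg Metric.diam_nonneg]
  refine (diam_cylSet_le_max hmaps hδ.le hT ω n).trans_lt (max_lt (half_lt_self hε) ?_)
  have : (N : ℝ) * δ ≤ n * δ := mul_le_mul_of_nonneg_right (by exact_mod_cast hn) hδ.le
  linarith

lemma eventually_dist_lt_of_mem_cylSet {h : Fin m → ℝ → ℝ}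
    (hmaps : ∀ i, Set.MapsTo (T i) (Set.Icc 0 1) (Set.Icc 0 1))
    (hdiam : TendstoUniformly (fun n ω => Metric.diam (cylSet T ω n)) 0 atTop)
    (hh : ∀ i, ContinuousOn (h i) (Set.Icc 0 1)) {ε : ℝ} (hε : 0 < ε) :
    ∀ᶠ n in atTop, ∀ i, ∀ ω, ∀ x ∈ cylSet T ω n, ∀ y ∈ cylSet T ω n,
      dist (h i x) (h i y) < ε := by
  refine eventually_all.2 fun i => ?_
  obtain ⟨η, hη, huc⟩ := Metric.uniformContinuousOn_iff.1
    (isCompact_Icc.uniformContinuousOn_of_continuous (hh i)) ε hε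
  filter_upwards [tendstoUniformly_zero_iff_norm_lt.1 hdiam η hη] with n hn ω x hx y hy
  have hsub := cylSet_subset_Icc hmaps ω n
  refine huc x (hsub hx) y (hsub hy) ((Metric.dist_le_diam_of_mem
    ((Metric.isBounded_Icc 0 1).subset hsub) hx hy).trans_lt ?_)
  exact (le_abs_self _).trans_lt (hn ω)

lemma exists_cylSet_succ_eq_Icc
    (hmaps : ∀ i, Set.MapsTo (T i) (Set.Icc 0 1) (Set.Icc 0 1))
    (hderiv : ∀ i, ∀ y ∈ Set.Icc (0 : ℝ) 1, HasDerivWithinAt (T i) (T' i y) (Set.Icc 0 1) y)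
    (hT'ne : ∀ i, ∀ y ∈ Set.Icc (0 : ℝ) 1, T' i y ≠ 0) {ω : ℕ → Fin m} {n : ℕ} {a b : ℝ}
    (hab : a < b) (hcyl : cylSet T (shift 1 ω) n = Set.Icc a b) :
    ∃ c d, c < d ∧ cylSet T ω (n + 1) = Set.Icc c d ∧
      ∃ ξ ∈ Set.Icc a b, d - c = |T' (ω 0) ξ| * (b - a) := by
  have hsub : Set.Icc a b ⊆ Set.Icc 0 1 := hcyl ▸ cylSet_subset_Icc hmaps (shift 1 ω) n
  rw [cylSet_succ, hcyl]
  exact exists_image_Icc_eq_Icc_of_deriv_ne_zero hab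
    (fun y hy => (hderiv (ω 0) y (hsub hy)).mono hsub) fun y hy => hT'ne (ω 0) y (hsub hy)

lemma exists_cylSet_eq_Icc (hmaps : ∀ i, Set.MapsTo (T i) (Set.Icc 0 1) (Set.Icc 0 1))
    (hderiv : ∀ i, ∀ y ∈ Set.Icc (0 : ℝ) 1, HasDerivWithinAt (T i) (T' i y) (Set.Icc 0 1) y)
    (hT'ne : ∀ i, ∀ y ∈ Set.Icc (0 : ℝ) 1, T' i y ≠ 0) (ω : ℕ → Fin m) (n : ℕ) :
    ∃ a b, a < b ∧ cylSet T ω n = Set.Icc a b := by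
  induction n generalizing ω with
  | zero => exact ⟨0, 1, one_pos, cylSet_zero T ω⟩
  | succ n ih =>
    obtain ⟨a, b, hab, hcyl⟩ := ih (shift 1 ω)
    obtain ⟨c, d, hcd, hcyl', -⟩ := exists_cylSet_succ_eq_Icc hmaps hderiv hT'ne hab hcyl
    exact ⟨c, d, hcd, hcyl'⟩

end Cylinders

/-- The almost additive sequence `φ n ω = -log D_n(ω)` that is compared with the Birkhoff sums of
`g`; the level `n` comes before `ω`, as for `birkhoffSum`. -/
noncomputable def negLogDiam {m : ℕ} (T : Fin m → ℝ → ℝ) (n : ℕ) (ω : ℕ → Fin m) : ℝ :=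
  -Real.log (Metric.diam (cylSet T ω n))

section NegLogDiam

variable {m : ℕ} {T T' : Fin m → ℝ → ℝ} {Pi g : (ℕ → Fin m) → ℝ}

lemma negLogDiam_zero (T : Fin m → ℝ → ℝ) (ω : ℕ → Fin m) : negLogDiam T 0 ω = 0 := by
  rw [negLogDiam, cylSet_zero, Real.diam_Icc zero_le_one, sub_zero, Real.log_one, neg_zero]

lemma exists_negLogDiam_succ_eq (hmaps : ∀ i, Set.MapsTo (T i) (Set.Icc 0 1) (Set.Icc 0 1))
    (hderiv : ∀ i, ∀ y ∈ Set.Icc (0 : ℝ) 1, HasDerivWithinAt (T i) (T' i y) (Set.Icc 0 1) y)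
    (hT'ne : ∀ i, ∀ y ∈ Set.Icc (0 : ℝ) 1, T' i y ≠ 0) (n : ℕ) (ω : ℕ → Fin m) :
    ∃ ξ ∈ cylSet T (shift 1 ω) n,
      negLogDiam T (n + 1) ω = negLogDiam T n (shift 1 ω) - Real.log |T' (ω 0) ξ| := by
  obtain ⟨a, b, hab, hcyl⟩ := exists_cylSet_eq_Icc hmaps hderiv hT'ne (shift 1 ω) n
  obtain ⟨c, d, hcd, hcyl', ξ, hξ, hlength⟩ :=
    exists_cylSet_succ_eq_Icc hmaps hderiv hT'ne hab hcyl
  have hT'ξ : |T' (ω 0) ξ| ≠ 0 := left_ne_zero_of_mul (hlength ▸ (sub_pos.2 hcd).ne')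
  refine ⟨ξ, hcyl ▸ hξ, ?_⟩
  rw [negLogDiam, negLogDiam, hcyl, hcyl', Real.diam_Icc hcd.le, Real.diam_Icc hab.le, hlength,
    Real.log_mul hT'ξ (sub_pos.2 hab).ne', neg_add']
  ring

variable (hmaps : ∀ i, Set.MapsTo (T i) (Set.Icc 0 1) (Set.Icc 0 1))
  (hderiv : ∀ i, ∀ y ∈ Set.Icc (0 : ℝ) 1, HasDerivWithinAt (T i) (T' i y) (Set.Icc 0 1) y)
  (hT'cont : ∀ i, ContinuousOn (T' i) (Set.Icc 0 1))
  (hT'ne : ∀ i, ∀ y ∈ Set.Icc (0 : ℝ) 1, T' i y ≠ 0)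
  (hPi : ∀ ω n, Pi ω ∈ cylSet T ω n)
  (hg : ∀ ω, g ω = -Real.log |T' (ω 0) (Pi (shift 1 ω))|)

include hmaps hderiv hT'ne hPi hg in
lemma exists_norm_negLogDiam_succ_sub_sub_eq_dist (n : ℕ) (ω : ℕ → Fin m) :
    ∃ x ∈ cylSet T (shift 1 ω) n, ∃ y ∈ cylSet T (shift 1 ω) n,
      ‖negLogDiam T (n + 1) ω - negLogDiam T n (shift 1 ω) - g ω‖
        = dist (Real.log |T' (ω 0) x|) (Real.log |T' (ω 0) y|) := by
  obtain ⟨ξ, hξ, hφ⟩ := exists_negLogDiam_succ_eq hmaps hderiv hT'ne n ω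
  refine ⟨Pi (shift 1 ω), hPi (shift 1 ω) n, ξ, hξ, ?_⟩
  rw [hφ, hg, dist_eq_norm]
  congr 1
  ring

include hmaps hderiv hT'cont hT'ne hPi hg

lemma bddAbove_range_norm_negLogDiam_succ_sub_sub (n : ℕ) :
    BddAbove (Set.range fun ω => ‖negLogDiam T (n + 1) ω - negLogDiam T n (shift 1 ω) - g ω‖) := by
  have hcompact : IsCompact (⋃ i, (fun y => Real.log |T' i y|) '' Set.Icc 0 1) :=
    isCompact_iUnion fun i => isCompact_Icc.image_of_continuousOn <|
      (hT'cont i).abs.log fun y hy => abs_ne_zero.2 (hT'ne i y hy)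
  obtain ⟨C, hC⟩ := Metric.isBounded_iff.1 hcompact.isBounded
  refine ⟨C, Set.forall_mem_range.2 fun ω => ?_⟩
  obtain ⟨x, hx, y, hy, herror⟩ :=
    exists_norm_negLogDiam_succ_sub_sub_eq_dist hmaps hderiv hT'ne hPi hg n ω
  have hsub := cylSet_subset_Icc hmaps (shift 1 ω) n
  exact herror.trans_le (hC (Set.mem_iUnion_of_mem (ω 0) ⟨x, hsub hx, rfl⟩)
    (Set.mem_iUnion_of_mem (ω 0) ⟨y, hsub hy, rfl⟩))

lemma tendstoUniformly_negLogDiam_succ_sub_sub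
    (hdiam : TendstoUniformly (fun n ω => Metric.diam (cylSet T ω n)) 0 atTop) :
    TendstoUniformly (fun n ω => negLogDiam T (n + 1) ω - negLogDiam T n (shift 1 ω) - g ω)
      0 atTop := by
  refine tendstoUniformly_zero_iff_norm_lt.2 fun ε hε => ?_
  have hlog : ∀ i, ContinuousOn (fun y => Real.log |T' i y|) (Set.Icc 0 1) := fun i =>
    (hT'cont i).abs.log fun y hy => abs_ne_zero.2 (hT'ne i y hy)
  filter_upwards [eventually_dist_lt_of_mem_cylSet hmaps hdiam hlog hε] with n hn ω
  obtain ⟨x, hx, y, hy, herror⟩ :=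
    exists_norm_negLogDiam_succ_sub_sub_eq_dist hmaps hderiv hT'ne hPi hg n ω
  exact herror.trans_lt (hn (ω 0) (shift 1 ω) x hx y hy)

end NegLogDiam

theorem diam_approx_by_birkhoff_general {m : ℕ} {T T' : Fin m → ℝ → ℝ}
    (hmaps : ∀ i, Set.MapsTo (T i) (Set.Icc 0 1) (Set.Icc 0 1))
    (hderiv : ∀ i, ∀ y ∈ Set.Icc (0 : ℝ) 1, HasDerivWithinAt (T i) (T' i y) (Set.Icc 0 1) y)
    (hT'cont : ∀ i, ContinuousOn (T' i) (Set.Icc 0 1))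
    (hT'ne : ∀ i, ∀ y ∈ Set.Icc (0 : ℝ) 1, T' i y ≠ 0)
    (hcontr : ∀ i, ∀ x ∈ Set.Icc (0 : ℝ) 1, ∀ y ∈ Set.Icc (0 : ℝ) 1, x ≠ y →
      dist (T i x) (T i y) < dist x y)
    {Pi : (ℕ → Fin m) → ℝ} (hPi : ∀ ω n, Pi ω ∈ cylSet T ω n)
    {g : (ℕ → Fin m) → ℝ} (hg : ∀ ω, g ω = -Real.log |T' (ω 0) (Pi (shift 1 ω))|) :
    TendstoUniformly (fun (n : ℕ) ω => -(1 / (n : ℝ)) * Real.log (Metric.diam (cylSet T ω n))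
      - birkhoffAverage ℝ (shift 1) g n ω) 0 atTop := by
  have hconv := tendstoUniformly_inv_smul_sub_birkhoffAverage
    (fun ω => (norm_eq_zero.2 (negLogDiam_zero T ω)).le)
    (bddAbove_range_norm_negLogDiam_succ_sub_sub hmaps hderiv hT'cont hT'ne hPi hg)
    (tendstoUniformly_negLogDiam_succ_sub_sub hmaps hderiv hT'cont hT'ne hPi hg
      (tendstoUniformly_diam_cylSet hmaps hcontr))
  simpa only [negLogDiam, smul_eq_mul, one_div, mul_neg, neg_mul] using hconv

/-- In the piecewise expanding interval setting, with the coding map `Π`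
(characterized by `Π(ω) ∈ I_n(ω)` for all `n`) and `g(ω) := −log T_{ω_1}′(Π(σω))`,
one has `lim_{n→∞} sup_{ω ∈ Σ} |−(1/n) log D_n(ω) − A_n g(ω)| = 0`, where
`A_n g(ω) = (1/n) ∑_{j=0}^{n−1} g(σ^j ω)`. -/
theorem diam_approx_by_birkhoff
    (m : ℕ) (hm : 2 ≤ m)
    (I : Fin m → Set ℝ) (T : Fin m → ℝ → ℝ) (T' : Fin m → ℝ → ℝ) (xfix : Fin m → ℝ)
    (hI : ∀ i, ∃ a b : ℝ, a < b ∧ 0 ≤ a ∧ b ≤ 1 ∧ I i = Set.Icc a b)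
    (hdisj : ∀ i j, i ≠ j → Disjoint (interior (I i)) (interior (I j)))
    (hbij : ∀ i, Set.BijOn (T i) (Set.Icc 0 1) (I i))
    (hderiv : ∀ i, ∀ y ∈ Set.Icc (0:ℝ) 1, HasDerivWithinAt (T i) (T' i y) (Set.Icc 0 1) y)
    (hT'cont : ∀ i, ContinuousOn (T' i) (Set.Icc 0 1))
    (hT'pos : ∀ i, ∀ y ∈ Set.Icc (0:ℝ) 1, 0 < T' i y)
    (hT'le : ∀ i, ∀ y ∈ Set.Icc (0:ℝ) 1, T' i y ≤ 1)
    (hxmem : ∀ i, xfix i ∈ I i)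
    (hxfix : ∀ i, T i (xfix i) = xfix i)
    (hxuniq : ∀ i, ∀ y ∈ Set.Icc (0:ℝ) 1, T i y = y → y = xfix i)
    (hT'lt : ∀ i, ∀ y ∈ Set.Icc (0:ℝ) 1, y ≠ xfix i → T' i y < 1)
    (Pi : (ℕ → Fin m) → ℝ) (hPi : ∀ ω n, Pi ω ∈ cylSet T ω n)
    (g : (ℕ → Fin m) → ℝ)
    (hg : ∀ ω : ℕ → Fin m, g ω = -Real.log (T' (ω 0) (Pi (fun k => ω (k + 1))))) :
    Tendsto (fun n : ℕ => ⨆ ω : ℕ → Fin m,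
        |(-(1 / (n : ℝ)) * Real.log (Metric.diam (cylSet T ω n))) -
          (1 / (n : ℝ)) * ∑ j ∈ Finset.range n, g (fun k => ω (k + j))|)
      atTop (𝓝 0) := by
  have hI01 : ∀ i, I i ⊆ Set.Icc 0 1 := fun i => by
    obtain ⟨a, b, -, ha, hb, hI⟩ := hI i
    exact hI ▸ Set.Icc_subset_Icc ha hb
  have hcontr : ∀ i, ∀ x ∈ Set.Icc (0 : ℝ) 1, ∀ y ∈ Set.Icc (0 : ℝ) 1, x ≠ y →
      dist (T i x) (T i y) < dist x y := fun i x hx y hy =>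
    dist_map_lt_dist_of_abs_deriv_lt_one_of_ne (hI01 i (hxmem i)) (hderiv i)
      (fun z hz hzx => (abs_of_pos (hT'pos i z hz)).trans_lt (hT'lt i z hz hzx)) hx hy
  have hunif := diam_approx_by_birkhoff_general (fun i => (hbij i).mapsTo.mono_right (hI01 i))
    hderiv hT'cont (fun i y hy => (hT'pos i y hy).ne') hcontr hPi (g := g)
    fun ω => by rw [hg, Real.log_abs, shift_one_eq]
  simpa only [birkhoffAverage_shift_one, Real.norm_eq_abs] using
    tendsto_iSup_norm_of_tendstoUniformly_zero hunif
end
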